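/- arXiv:1506.02901 — 4 statements merged into one kernel-verified Lean document; each statement's English description precedes it below -/
import Mathlib

section
/- The error of the dual-corrected output is bounded by the product of the dual norm of the dual residual and the norm of the primal error: |s^𝒩 − s_N^{pd}| ≤ ‖r^du‖_{(X^𝒩)'} · ‖e^pr‖_X, where e^pr = u^𝒩 − u_N is the primal error. -/
/-- The dual norm of a functional `r` taken over a subspace `S`:
the supremum over `v ∈ S`, `v ≠ 0`, of `‖r v‖ / ‖v‖`. -/
noncomputable def dualNormOn {X : Type*} [NormedAddCommGroup X] [NormedSpace ℂ X]
    (S : Submodule ℂ X) (r : X → ℂ) : ℝ :=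
  sSup {c : ℝ | ∃ v ∈ S, v ≠ 0 ∧ c = ‖r v‖ / ‖v‖}

/-- The error of the dual-corrected output is bounded by the
product of the dual norm of the dual residual and the norm of the primal
error: `|s^𝒩 − s_N^{pd}| ≤ ‖r^du‖_{(X^𝒩)'} ⬝ ‖e^pr‖_X`. -/
theorem dual_corrected_output_error_bound
    {X : Type*} [NormedAddCommGroup X] [NormedSpace ℂ X]
    (a : X →L[ℂ] X →L[ℂ] ℂ) (f l : X →L[ℂ] ℂ)
    (XN XNN : Submodule ℂ X) (h_sub : XN ≤ XNN)
    (uT : X) (huT : uT ∈ XNN) (h_truth : ∀ v ∈ XNN, a uT v = f v)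
    (uR : X) (huR : uR ∈ XN) (h_reduced : ∀ v ∈ XN, a uR v = f v)
    (wT : X) (hwT : wT ∈ XNN) (h_dual_truth : ∀ v ∈ XNN, a v wT = -l v)
    (wR : X) (hwR : wR ∈ XN) (h_dual_reduced : ∀ v ∈ XN, a v wR = -l v) :
    ‖l uT - (l uR - (f wR - a uR wR))‖ ≤
      dualNormOn XNN (fun v => -l v - a v wR) * ‖uT - uR‖ := by
  have key : l uT - (l uR - (f wR - a uR wR))
      = -(-l (uT - uR) - a (uT - uR) wR) := by
    rw [← h_truth wR (h_sub hwR)]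
    simp only [map_sub, ContinuousLinearMap.sub_apply]
    ring
  rw [key, norm_neg]
  by_cases he : uT - uR = 0
  · simp [he]
  have hpos : 0 < ‖uT - uR‖ := norm_pos_iff.mpr he
  rw [← div_le_iff₀ hpos]
  unfold dualNormOn
  refine le_csSup ⟨‖-l - a.flip wR‖, ?_⟩
    ⟨uT - uR, XNN.sub_mem huT (h_sub huR), he, rfl⟩
  rintro c ⟨v, -, hv, rfl⟩
  rw [div_le_iff₀ (norm_pos_iff.mpr hv)]
  simpa using (-l - a.flip wR).le_opNorm v
end

section
/- Under the discrete inf-sup condition with constant β > 0, the output error satisfies |s^𝒩 − s_N| = |l(u^𝒩 − u_N)| ≤ β^{-1} ‖l‖_{(X^𝒩)'} ‖r^pr‖_{(X^𝒩)'}, where s^𝒩 = l(u^𝒩) and s_N = l(u_N). -/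
/-- Under the discrete inf-sup condition with constant `β > 0`,
the output error satisfies
`|s^𝒩 − s_N| = |l(u^𝒩 − u_N)| ≤ β⁻¹ ‖l‖_{(X^𝒩)'} ‖r^pr‖_{(X^𝒩)'}`,
where `s^𝒩 = l(u^𝒩)` and `s_N = l(u_N)`. -/
theorem output_error_bound_inf_sup
    {X : Type*} [NormedAddCommGroup X] [NormedSpace ℂ X]
    (a : X →L[ℂ] X →L[ℂ] ℂ) (f l : X →L[ℂ] ℂ)
    (XN XNN : Submodule ℂ X) (h_sub : XN ≤ XNN)
    (uT : X) (huT : uT ∈ XNN) (h_truth : ∀ v ∈ XNN, a uT v = f v)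
    (uR : X) (huR : uR ∈ XN) (h_reduced : ∀ v ∈ XN, a uR v = f v)
    (β : ℝ) (hβ : 0 < β)
    (h_infsup : ∀ u ∈ XNN, β * ‖u‖ ≤ dualNormOn XNN (fun v => a u v)) :
    ‖l uT - l uR‖ = ‖l (uT - uR)‖ ∧
    ‖l (uT - uR)‖ ≤
      β⁻¹ * dualNormOn XNN (fun v => l v) * dualNormOn XNN (fun v => f v - a uR v) := by
  have hle : ∀ v ∈ XNN, ‖l v‖ ≤ dualNormOn XNN (fun v => l v) * ‖v‖ := by
    intro v hv
    by_cases h0 : v = 0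
    · simp [h0]
    · have hpos : 0 < ‖v‖ := norm_pos_iff.mpr h0
      rw [← div_le_iff₀ hpos]
      refine le_csSup ⟨‖l‖, ?_⟩ ⟨v, hv, h0, rfl⟩
      rintro c ⟨w, _, hw, rfl⟩
      exact (div_le_iff₀ (norm_pos_iff.mpr hw)).mpr (l.le_opNorm w)
  have hnn : 0 ≤ dualNormOn XNN (fun v => l v) := by
    apply Real.sSup_nonneg
    rintro c ⟨w, _, _, rfl⟩
    positivity
  have he : uT - uR ∈ XNN := XNN.sub_mem huT (h_sub huR)
  have hres : dualNormOn XNN (fun v => a (uT - uR) v)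
      = dualNormOn XNN (fun v => f v - a uR v) := by
    unfold dualNormOn
    congr 1
    ext c
    constructor
    · rintro ⟨v, hv, h0, rfl⟩
      exact ⟨v, hv, h0, by simp [h_truth v hv]⟩
    · rintro ⟨v, hv, h0, rfl⟩
      exact ⟨v, hv, h0, by simp [h_truth v hv]⟩
  refine ⟨by rw [map_sub], (hle _ he).trans ?_⟩
  have h1 := h_infsup _ he
  rw [hres] at h1
  have h2 : ‖uT - uR‖ ≤ β⁻¹ * dualNormOn XNN (fun v => f v - a uR v) :=
    (le_inv_mul_iff₀ hβ).mpr h1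
  calc _ ≤ dualNormOn XNN (fun v => l v) * (β⁻¹ * dualNormOn XNN (fun v => f v - a uR v)) :=
        mul_le_mul_of_nonneg_left h2 hnn
    _ = _ := by ring
end

section
/- Under the discrete inf-sup condition with constant β > 0, the error of the dual-corrected output is bounded by the product of the dual norms of the dual and primal residuals: |s^𝒩 − s_N^{pd}| ≤ β^{-1} ‖r^du‖_{(X^𝒩)'} ‖r^pr‖_{(X^𝒩)'}. -/
theorem norm_le_dualNormOn_mul {X : Type*} [NormedAddCommGroup X] [NormedSpace ℂ X]
    (S : Submodule ℂ X) (g : X →L[ℂ] ℂ) (v : X) (hv : v ∈ S) :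
    ‖g v‖ ≤ dualNormOn S (fun x => g x) * ‖v‖ := by
  by_cases h0 : v = 0
  · simp [h0]
  · have hpos : 0 < ‖v‖ := norm_pos_iff.mpr h0
    rw [← div_le_iff₀ hpos]
    refine le_csSup ⟨‖g‖, ?_⟩ ⟨v, hv, h0, rfl⟩
    rintro c ⟨w, -, hw, rfl⟩
    exact (div_le_iff₀ (norm_pos_iff.mpr hw)).mpr (g.le_opNorm w)

theorem dualNormOn_nonneg' {X : Type*} [NormedAddCommGroup X] [NormedSpace ℂ X]
    (S : Submodule ℂ X) (r : X → ℂ) : 0 ≤ dualNormOn S r := by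
  apply Real.sSup_nonneg
  rintro c ⟨w, -, -, rfl⟩
  positivity

theorem dualNormOn_congr' {X : Type*} [NormedAddCommGroup X] [NormedSpace ℂ X]
    (S : Submodule ℂ X) (r q : X → ℂ) (h : ∀ v ∈ S, r v = q v) :
    dualNormOn S r = dualNormOn S q := by
  unfold dualNormOn
  congr 1
  ext c
  constructor
  · rintro ⟨v, hv, h0, rfl⟩
    exact ⟨v, hv, h0, by rw [h v hv]⟩
  · rintro ⟨v, hv, h0, rfl⟩
    exact ⟨v, hv, h0, by rw [h v hv]⟩

/-- Under the discrete inf-sup condition with constant `β > 0`,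
the error of the dual-corrected output is bounded by the product of the dual
norms of the dual and primal residuals:
`|s^𝒩 − s_N^{pd}| ≤ β⁻¹ ‖r^du‖_{(X^𝒩)'} ‖r^pr‖_{(X^𝒩)'}`,
where `s^𝒩 = l(u^𝒩)` and `s_N^{pd} = l(u_N) − r^pr(w_N)`. -/
theorem dual_corrected_output_error_bound_inf_sup
    {X : Type*} [NormedAddCommGroup X] [NormedSpace ℂ X]
    (a : X →L[ℂ] X →L[ℂ] ℂ) (f l : X →L[ℂ] ℂ)
    (XN XNN : Submodule ℂ X) (h_sub : XN ≤ XNN)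
    (uT : X) (huT : uT ∈ XNN) (h_truth : ∀ v ∈ XNN, a uT v = f v)
    (uR : X) (huR : uR ∈ XN) (h_reduced : ∀ v ∈ XN, a uR v = f v)
    (wT : X) (hwT : wT ∈ XNN) (h_dual_truth : ∀ v ∈ XNN, a v wT = -l v)
    (wR : X) (hwR : wR ∈ XN) (h_dual_reduced : ∀ v ∈ XN, a v wR = -l v)
    (β : ℝ) (hβ : 0 < β)
    (h_infsup : ∀ u ∈ XNN, β * ‖u‖ ≤ dualNormOn XNN (fun v => a u v)) :
    ‖l uT - (l uR - (f wR - a uR wR))‖ ≤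
      β⁻¹ * dualNormOn XNN (fun v => -l v - a v wR) *
        dualNormOn XNN (fun v => f v - a uR v) := by
  have he : uT - uR ∈ XNN := XNN.sub_mem huT (h_sub huR)
  have h1 := norm_le_dualNormOn_mul XNN (-l - a.flip wR) (uT - uR) he
  have h2 := h_infsup _ he
  rw [dualNormOn_congr' XNN (fun v => a (uT - uR) v) (fun v => f v - a uR v)
    (fun v hv => by simp [h_truth v hv])] at h2
  have h3 : l uT - (l uR - (f wR - a uR wR)) = -((-l - a.flip wR) (uT - uR)) := by
    have h4 := h_truth wR (h_sub hwR)
    simp only [sub_apply, neg_apply, ContinuousLinearMap.flip_apply, map_sub, h4]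
    ring
  have h5 : dualNormOn XNN (fun x => (-l - a.flip wR) x)
      = dualNormOn XNN (fun v => -l v - a v wR) :=
    dualNormOn_congr' XNN _ _ (fun v _ => by simp)
  rw [h3, norm_neg]
  rw [h5] at h1
  refine h1.trans ?_
  have h6 : ‖uT - uR‖ ≤ β⁻¹ * dualNormOn XNN (fun v => f v - a uR v) := by
    rw [inv_mul_eq_div, le_div_iff₀ hβ]
    linarith
  calc _ ≤ dualNormOn XNN (fun v => -l v - a v wR) *
        (β⁻¹ * dualNormOn XNN (fun v => f v - a uR v)) :=
        mul_le_mul_of_nonneg_left h6 (dualNormOn_nonneg' _ _)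
    _ = _ := by ring
end

section
/- Let 0 ≤ M < 1, k ∈ ℝ, let α : ℝ → ℂ be continuously differentiable with α(s) ≠ 0 for all s, and let p : ℝ² → ℂ be twice continuously differentiable. Define the operator T by (Tq)(x₁, x₂) = α(x₁)(∂_{x₁} q(x₁, x₂) + (ikM/(1 − M²)) q(x₁, x₂)). Then at every point (x₁, x₂) ∈ ℝ², the PML operator satisfies the identity (1 − M²) T(Tp) + ∂²_{x₂} p + (k²/(1 − M²)) p = α(x₁) · [ ∂_{x₁}( (1 − M²) α(x₁) ∂_{x₁} p + 2ikM α(x₁) p ) + ∂_{x₂}( α(x₁)^{-1} ∂_{x₂} p ) + ( k_α² − ikM α'(x₁) ) p ], where k_α² = k² ( α(x₁)^{-1} − α(x₁) M² ) / (1 − M²). -/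
open Complex

/-- Partial derivative with respect to `x₁` of a function on `ℝ²`. -/
noncomputable def dx1 (g : ℝ × ℝ → ℂ) (x : ℝ × ℝ) : ℂ :=
  fderiv ℝ g x (1, 0)

/-- Partial derivative with respect to `x₂` of a function on `ℝ²`. -/
noncomputable def dx2 (g : ℝ × ℝ → ℂ) (x : ℝ × ℝ) : ℂ :=
  fderiv ℝ g x (0, 1)

/-- The PML operator `(Tq)(x₁,x₂) = α(x₁)(∂_{x₁} q + (ikM/(1 − M²)) q)`. -/
noncomputable def pmlT (M k : ℝ) (α : ℝ → ℂ) (q : ℝ × ℝ → ℂ) : ℝ × ℝ → ℂ :=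
  fun x => α x.1 * (dx1 q x + (I * (k : ℂ) * (M : ℂ) / (1 - (M : ℂ) ^ 2)) * q x)

theorem aux_dmul (f g : ℝ × ℝ → ℂ) (x : ℝ × ℝ) (v : ℝ × ℝ) (hf : DifferentiableAt ℝ f x)
    (hg : DifferentiableAt ℝ g x) :
    fderiv ℝ (fun y => f y * g y) x v = f x * fderiv ℝ g x v + fderiv ℝ f x v * g x := by
  have h := (hf.hasFDerivAt.mul hg.hasFDerivAt).fderiv
  have h2 : fderiv ℝ (fun y => f y * g y) x = _ := h
  rw [h2]
  simp [mul_comm]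

theorem aux_dadd (f g : ℝ × ℝ → ℂ) (x : ℝ × ℝ) (v : ℝ × ℝ) (hf : DifferentiableAt ℝ f x)
    (hg : DifferentiableAt ℝ g x) :
    fderiv ℝ (fun y => f y + g y) x v = fderiv ℝ f x v + fderiv ℝ g x v := by
  have h2 : fderiv ℝ (fun y => f y + g y) x = _ := (hf.hasFDerivAt.add hg.hasFDerivAt).fderiv
  rw [h2]
  simp

theorem aux_dfst (a : ℝ → ℂ) (x v : ℝ × ℝ) (ha : DifferentiableAt ℝ a x.1) :
    fderiv ℝ (fun y : ℝ × ℝ => a y.1) x v = v.1 * deriv a x.1 := by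
  have h2 : fderiv ℝ (fun y : ℝ × ℝ => a y.1) x = _ :=
    (ha.hasFDerivAt.comp x hasFDerivAt_fst).fderiv
  rw [h2]
  simp

/-- For `0 ≤ M < 1`, `k ∈ ℝ`, `α : ℝ → ℂ` continuously
differentiable and nowhere zero, and `p : ℝ² → ℂ` twice continuously
differentiable, at every point `(x₁,x₂)` the PML operator satisfies
`(1 − M²) T(Tp) + ∂²_{x₂} p + (k²/(1 − M²)) p
  = α(x₁) · [ ∂_{x₁}((1 − M²) α ∂_{x₁} p + 2ikM α p)
      + ∂_{x₂}(α⁻¹ ∂_{x₂} p) + (k_α² − ikM α') p ]`,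
where `k_α² = k² (α⁻¹ − α M²)/(1 − M²)`. -/
theorem pml_operator_divergence_form
    (M k : ℝ) (hM0 : 0 ≤ M) (hM1 : M < 1)
    (α : ℝ → ℂ) (hα : ContDiff ℝ 1 α) (hα0 : ∀ s, α s ≠ 0)
    (p : ℝ × ℝ → ℂ) (hp : ContDiff ℝ 2 p) :
    ∀ x : ℝ × ℝ,
      (1 - (M : ℂ) ^ 2) * pmlT M k α (pmlT M k α p) x + dx2 (dx2 p) x +
          ((k : ℂ) ^ 2 / (1 - (M : ℂ) ^ 2)) * p x =
        α x.1 *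
          (dx1 (fun y => (1 - (M : ℂ) ^ 2) * α y.1 * dx1 p y +
              2 * I * (k : ℂ) * (M : ℂ) * α y.1 * p y) x +
            dx2 (fun y => (α y.1)⁻¹ * dx2 p y) x +
            ((k : ℂ) ^ 2 * ((α x.1)⁻¹ - α x.1 * (M : ℂ) ^ 2) / (1 - (M : ℂ) ^ 2)
              - I * (k : ℂ) * (M : ℂ) * deriv α x.1) * p x) := by
  intro x
  have hD : (1 - (M : ℂ) ^ 2) ≠ 0 := by
    have h : (1 - M ^ 2 : ℝ) ≠ 0 := by nlinarith
    exact_mod_cast h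
  have ha0 := hα0 x.1
  have hda : Differentiable ℝ α := hα.differentiable (by norm_num)
  have hdp : Differentiable ℝ p := hp.differentiable (by norm_num)
  have hfp : Differentiable ℝ (fderiv ℝ p) :=
    (hp.fderiv_right (m := 1) (by norm_num)).differentiable (by norm_num)
  have hd1 : Differentiable ℝ (dx1 p) := fun y => (hfp y).clm_apply (differentiableAt_const _)
  have hd2 : Differentiable ℝ (dx2 p) := fun y => (hfp y).clm_apply (differentiableAt_const _)
  have hA : Differentiable ℝ (fun y : ℝ × ℝ => α y.1) := hda.comp differentiable_fst
  have hi : Differentiable ℝ (fun s => (α s)⁻¹) := hda.inv hα0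
  have hI : Differentiable ℝ (fun y : ℝ × ℝ => (α y.1)⁻¹) := hi.comp differentiable_fst
  have hcm : ∀ (c : ℂ) (g : ℝ × ℝ → ℂ), Differentiable ℝ g → Differentiable ℝ (fun y => c * g y) :=
    fun c g hg => hg.const_mul c
  have hcd : ∀ (c : ℂ) (g : ℝ × ℝ → ℂ) (v : ℝ × ℝ), Differentiable ℝ g →
      fderiv ℝ (fun y => c * g y) x v = c * fderiv ℝ g x v := by
    intro c g v hg
    rw [aux_dmul _ _ _ _ (differentiableAt_const _) (hg x)]
    simp
  have e1 : dx1 (pmlT M k α p) x = α x.1 * (dx1 (dx1 p) x +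
      (I * (k : ℂ) * (M : ℂ) / (1 - (M : ℂ) ^ 2)) * dx1 p x) + deriv α x.1 * (dx1 p x +
      (I * (k : ℂ) * (M : ℂ) / (1 - (M : ℂ) ^ 2)) * p x) := by
    have := hcm (I * (k : ℂ) * (M : ℂ) / (1 - (M : ℂ) ^ 2)) p hdp
    conv_lhs => unfold dx1 pmlT
    rw [aux_dmul _ _ _ _ (hA x) ((hd1 x).fun_add (this x)), aux_dadd _ _ _ _ (hd1 x) (this x),
      hcd _ _ _ hdp, aux_dfst _ _ _ (hda _)]
    simp [dx1]
  have e2 : dx1 (fun y => (1 - (M : ℂ) ^ 2) * α y.1 * dx1 p y +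
      2 * I * (k : ℂ) * (M : ℂ) * α y.1 * p y) x =
      (1 - (M : ℂ) ^ 2) * (α x.1 * dx1 (dx1 p) x + deriv α x.1 * dx1 p x) +
      2 * I * (k : ℂ) * (M : ℂ) * (α x.1 * dx1 p x + deriv α x.1 * p x) := by
    have h1 := hcm (1 - (M : ℂ) ^ 2) _ hA
    have h2 := hcm (2 * I * (k : ℂ) * (M : ℂ)) _ hA
    conv_lhs => rw [dx1]
    rw [aux_dadd _ _ _ _ ((h1 x).fun_mul (hd1 x)) ((h2 x).fun_mul (hdp x)),
      aux_dmul _ _ _ _ (h1 x) (hd1 x), aux_dmul _ _ _ _ (h2 x) (hdp x),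
      hcd _ _ _ hA, hcd _ _ _ hA, aux_dfst _ _ _ (hda _)]
    simp only [dx1]
    push_cast
    ring
  have e3 : dx2 (fun y => (α y.1)⁻¹ * dx2 p y) x = (α x.1)⁻¹ * dx2 (dx2 p) x := by
    conv_lhs => rw [dx2]
    rw [aux_dmul _ _ _ _ (hI x) (hd2 x), aux_dfst (fun s => (α s)⁻¹) _ _ (hi _)]
    simp [dx2]
  rw [e2, e3]
  conv_lhs => rw [pmlT]
  rw [e1]
  simp only [pmlT]
  field_simp
  ring_nf
  simp only [I_sq]
  ring
end
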